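/- Let T : [0,1] → [0,1] be a Markov interval map satisfying hypotheses (A1)–(A4). Then T is ergodic with respect to Lebesgue measure: every Borel set A with T^{-1}A = A (mod Lebesgue-null sets) satisfies Leb(A) = 0 or Leb([0,1] \ A) = 0. -/

import Mathlib

open MeasureTheory Set Filter

/-- An interval map `T : [0,1] → [0,1]` which is Markov with respect to the
partition `{[a_j, a_{j+1}]}` given by the strictly increasing sequence
`0 = a_0 < a_1 < ⋯` with supremum `1`, satisfying hypotheses (A1)–(A4).
The branch extensions are `φ j`, with first and second derivatives
`φd j` and `φdd j` (taken within `[a_j, a_{j+1}]`). -/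
structure IntervalMapSetup where
  T : ℝ → ℝ
  a : ℕ → ℝ
  φ : ℕ → ℝ → ℝ
  φd : ℕ → ℝ → ℝ
  φdd : ℕ → ℝ → ℝ
  Λ : ℝ
  K : ℝ
  β : ℝ
  c₁ : ℝ
  c₂ : ℝ
  ha0 : a 0 = 0
  ha_mono : StrictMono a
  ha_lt : ∀ j, a j < 1
  ha_lim : Tendsto a atTop (nhds 1)
  hT_maps : MapsTo T (Icc 0 1) (Icc 0 1)
  -- `T` coincides with the branch `φ j` on the open interval `(a_j, a_{j+1})`
  hT_eq : ∀ j, ∀ x ∈ Ioo (a j) (a (j+1)), T x = φ j x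
  -- (A1): each branch is a bijection onto `[0,1]`, `C²` up to the boundary
  hφ_bij : ∀ j, BijOn (φ j) (Icc (a j) (a (j+1))) (Icc 0 1)
  hφ_d : ∀ j, ∀ x ∈ Icc (a j) (a (j+1)),
    HasDerivWithinAt (φ j) (φd j x) (Icc (a j) (a (j+1))) x
  hφ_dd : ∀ j, ∀ x ∈ Icc (a j) (a (j+1)),
    HasDerivWithinAt (φd j) (φdd j x) (Icc (a j) (a (j+1))) x
  hφdd_cont : ∀ j, ContinuousOn (φdd j) (Icc (a j) (a (j+1)))
  -- (A2): uniform expansion on branches `j ≥ 1`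
  hΛ : 1 < Λ
  hA2 : ∀ j, 1 ≤ j → ∀ x ∈ Icc (a j) (a (j+1)), Λ ≤ |φd j x|
  -- (A3): distortion bound
  hK : 0 < K
  hA3 : ∀ j, ∀ x ∈ Icc (a j) (a (j+1)), |φdd j x| / (φd j x) ^ 2 ≤ K
  -- (A4): indifferent fixed point at 0
  hβ : 0 ≤ β
  hc₁ : 0 < c₁
  hc₁₂ : c₁ < c₂
  hA4_conv : ConvexOn ℝ (Icc (a 0) (a 1)) (φ 0)
  hA4_fix : φ 0 0 = 0
  hA4_d1 : φd 0 0 = 1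
  hA4_exp : ∀ x : ℝ, 0 < x → x ≤ a 1 → 1 < φd 0 x
  hA4_dd : ∀ x ∈ Ioo (0:ℝ) (a 1), c₁ * x ^ β ≤ φdd 0 x ∧ φdd 0 x ≤ c₂ * x ^ β

namespace IntervalMapSetup

variable (S : IntervalMapSetup)

/-- the partition intervals -/
def I (j : ℕ) : Set ℝ := Icc (S.a j) (S.a (j+1))

/-- inverse branches -/
noncomputable def ψ (j : ℕ) : ℝ → ℝ := Function.invFunOn (S.φ j) (S.I j)

/-- transfer operator of one branch -/
noncomputable def L (j : ℕ) (g : ℝ → ℝ) (y : ℝ) : ℝ := g (S.ψ j y) / |S.φd j (S.ψ j y)|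

/-- log-Lipschitz positive functions on the unit interval -/
def LL (c : ℝ) (h : ℝ → ℝ) : Prop :=
  (∀ y ∈ Icc (0:ℝ) 1, 0 < h y) ∧
    ∀ y ∈ Icc (0:ℝ) 1, ∀ z ∈ Icc (0:ℝ) 1, h y ≤ Real.exp (c * |y - z|) * h z

def Inv (B : Set ℝ) : Prop :=
  B ⊆ Icc 0 1 ∧ MeasurableSet B ∧ volume (symmDiff (Set.Icc 0 1 ∩ S.T ⁻¹' B) B) = 0

lemma a_nonneg (j : ℕ) : 0 ≤ S.a j := by
  rw [← S.ha0]; exact S.ha_mono.monotone (Nat.zero_le j)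

lemma I_sub (j : ℕ) : S.I j ⊆ Icc 0 1 := fun _ hx =>
  ⟨(S.a_nonneg j).trans hx.1, hx.2.trans (S.ha_lt _).le⟩

lemma I_sub' (j : ℕ) (hj : 1 ≤ j) : S.I j ⊆ Icc (S.a 1) 1 := fun _ hx =>
  ⟨(S.ha_mono.monotone hj).trans hx.1, hx.2.trans (S.ha_lt _).le⟩

lemma ψ_mem (j : ℕ) {y : ℝ} (hy : y ∈ Icc (0:ℝ) 1) : S.ψ j y ∈ S.I j :=
  Function.invFunOn_mem ((S.hφ_bij j).surjOn hy)

lemma φ_ψ (j : ℕ) {y : ℝ} (hy : y ∈ Icc (0:ℝ) 1) : S.φ j (S.ψ j y) = y :=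
  Function.invFunOn_eq ((S.hφ_bij j).surjOn hy)

lemma ψ_φ (j : ℕ) {x : ℝ} (hx : x ∈ S.I j) : S.ψ j (S.φ j x) = x :=
  (S.hφ_bij j).injOn.leftInvOn_invFunOn hx

lemma ψ_mem01 (j : ℕ) {y : ℝ} (hy : y ∈ Icc (0:ℝ) 1) : S.ψ j y ∈ Icc (0:ℝ) 1 :=
  S.I_sub j (S.ψ_mem j hy)

lemma a1_pos : 0 < S.a 1 := by
  rw [← S.ha0]; exact S.ha_mono Nat.zero_lt_one

lemma φd_ne (j : ℕ) {x : ℝ} (hx : x ∈ S.I j) : S.φd j x ≠ 0 := by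
  rcases Nat.eq_zero_or_pos j with rfl | hj
  · have h0 : 0 ≤ x := (S.I_sub 0 hx).1
    rcases h0.eq_or_lt with h | h
    · rw [← h, S.hA4_d1]; norm_num
    · have := S.hA4_exp x h hx.2
      linarith
  · have := S.hA2 j hj x hx
    have h1 := S.hΛ
    intro h
    rw [h, abs_zero] at this
    linarith

/-- monotonicity from a nonnegative derivative within a closed interval -/
lemma mono_aux {f f' : ℝ → ℝ} {a b : ℝ}
    (hf : ∀ x ∈ Icc a b, HasDerivWithinAt f (f' x) (Icc a b) x)
    (h0 : ∀ x ∈ Icc a b, 0 ≤ f' x) : MonotoneOn f (Icc a b) := by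
  apply monotoneOn_of_hasDerivWithinAt_nonneg (f' := f') (convex_Icc a b)
  · exact fun x hx => (hf x hx).continuousWithinAt
  · exact fun x hx => (hf x (interior_subset hx)).mono interior_subset
  · exact fun x hx => h0 x (interior_subset hx)

lemma abs_le_of_mono {f g : ℝ → ℝ} {s : Set ℝ} (h1 : MonotoneOn (fun x => f x - g x) s)
    (h2 : MonotoneOn (fun x => f x + g x) s) {x y : ℝ} (hx : x ∈ s) (hy : y ∈ s) :
    |g x - g y| ≤ |f x - f y| := by
  rcases le_total x y with h | h
  · have e1 := h1 hx hy h
    have e2 := h2 hx hy h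
    simp only at e1 e2
    rw [abs_sub_comm (f x), abs_of_nonneg (a := f y - f x) (by linarith), abs_le]
    constructor <;> linarith
  · have e1 := h1 hy hx h
    have e2 := h2 hy hx h
    simp only at e1 e2
    rw [abs_of_nonneg (a := f x - f y) (by linarith), abs_le]
    constructor <;> linarith

/-- comparison principle for a function dominated in derivative by a nonvanishing one -/
lemma compare {f f' g g' : ℝ → ℝ} {a b : ℝ}
    (hf : ∀ x ∈ Icc a b, HasDerivWithinAt f (f' x) (Icc a b) x)
    (hg : ∀ x ∈ Icc a b, HasDerivWithinAt g (g' x) (Icc a b) x)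
    (hne : ∀ x ∈ Icc a b, f' x ≠ 0)
    (hle : ∀ x ∈ Icc a b, |g' x| ≤ |f' x|) {x y : ℝ} (hx : x ∈ Icc a b) (hy : y ∈ Icc a b) :
    |g x - g y| ≤ |f x - f y| := by
  rcases hasDerivWithinAt_forall_lt_or_forall_gt_of_forall_ne (convex_Icc a b) hf hne with h | h
  · have := abs_le_of_mono (f := fun x => - f x) (g := g) (s := Icc a b)
      (mono_aux (f' := fun x => - f' x - g' x) (fun x hx => (hf x hx).neg.sub (hg x hx)) ?_)
      (mono_aux (f' := fun x => - f' x + g' x) (fun x hx => (hf x hx).neg.add (hg x hx)) ?_) hx hy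
    · rwa [neg_sub_neg, abs_sub_comm (f y)] at this
    · intro x hx
      have := hle x hx
      rw [abs_of_neg (h x hx), abs_le] at this
      linarith
    · intro x hx
      have := hle x hx
      rw [abs_of_neg (h x hx), abs_le] at this
      linarith
  · refine abs_le_of_mono (f := f) (g := g) (s := Icc a b)
      (mono_aux (f' := fun x => f' x - g' x) (fun x hx => (hf x hx).sub (hg x hx)) ?_)
      (mono_aux (f' := fun x => f' x + g' x) (fun x hx => (hf x hx).add (hg x hx)) ?_) hx hy
    · intro x hx
      have := hle x hx
      rw [abs_of_pos (h x hx), abs_le] at this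
      linarith
    · intro x hx
      have := hle x hx
      rw [abs_of_pos (h x hx), abs_le] at this
      linarith

lemma log_dist (j : ℕ) {x y : ℝ} (hx : x ∈ S.I j) (hy : y ∈ S.I j) :
    |Real.log (S.φd j x) - Real.log (S.φd j y)| ≤ S.K * |S.φ j x - S.φ j y| := by
  have := compare (f := fun x => S.K * S.φ j x) (f' := fun x => S.K * S.φd j x)
    (g := fun x => Real.log (S.φd j x)) (g' := fun x => S.φdd j x / S.φd j x)
    (fun x hx => (S.hφ_d j x hx).const_mul S.K)
    (fun x hx => (S.hφ_dd j x hx).log (S.φd_ne j hx))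
    (fun x hx => mul_ne_zero S.hK.ne' (S.φd_ne j hx))
    (fun x hx => by
      have h3 := S.hA3 j x hx
      have h4 : 0 < |S.φd j x| := abs_pos.2 (S.φd_ne j hx)
      rw [← sq_abs (S.φd j x), div_le_iff₀ (by positivity)] at h3
      rw [abs_div, abs_mul, abs_of_pos S.hK, div_le_iff₀ h4]
      linarith) hx hy
  rwa [← mul_sub, abs_mul, abs_of_pos S.hK] at this

lemma expand (j : ℕ) (hj : 1 ≤ j) {x y : ℝ} (hx : x ∈ S.I j) (hy : y ∈ S.I j) :
    S.Λ * |x - y| ≤ |S.φ j x - S.φ j y| := by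
  have hΛ := S.hΛ
  have := compare (f := S.φ j) (f' := S.φd j)
    (g := fun x => S.Λ * x) (g' := fun x => S.Λ * 1)
    (fun x hx => (S.hφ_d j x hx))
    (fun x hx => (hasDerivWithinAt_id x _).const_mul _)
    (fun x hx => S.φd_ne j hx)
    (fun x hx => by
      rw [mul_one, abs_of_pos (by linarith)]
      exact S.hA2 j hj x hx) hx hy
  rwa [← mul_sub, abs_mul, abs_of_pos (by linarith)] at this

/-- strict expansion of the zero branch -/
lemma expand0 {x y : ℝ} (hx : x ∈ S.I 0) (hy : y ∈ S.I 0) (hxy : x < y) :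
    y - x < S.φ 0 y - S.φ 0 x := by
  have hc : ∀ x ∈ Icc (S.a 0) (S.a (0+1)), HasDerivWithinAt (fun x => S.φ 0 x - x) (S.φd 0 x - 1)
      (Icc (S.a 0) (S.a (0+1))) x :=
    fun x hx => (S.hφ_d 0 x hx).sub (hasDerivWithinAt_id x _)
  have : StrictMonoOn (fun x => S.φ 0 x - x) (Icc (S.a 0) (S.a (0+1))) := by
    apply strictMonoOn_of_hasDerivWithinAt_pos (f' := fun x => S.φd 0 x - 1) (convex_Icc _ _)
    · exact fun x hx => (hc x hx).continuousWithinAt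
    · exact fun x hx => (hc x (interior_subset hx)).mono interior_subset
    · intro x hx
      rw [interior_Icc, S.ha0] at hx
      have := S.hA4_exp x hx.1 hx.2.le
      linarith
  have := this hx hy hxy
  simp only at this
  linarith

lemma ψ0_lt {u v : ℝ} (hu : u ∈ Icc (0:ℝ) 1) (hv : v ∈ Icc (0:ℝ) 1) (h : u < v) :
    S.ψ 0 u < S.ψ 0 v ∧ S.ψ 0 v - S.ψ 0 u < v - u := by
  have h1 : S.ψ 0 u < S.ψ 0 v := by
    by_contra! hc
    rcases hc.eq_or_lt with e | e
    · have := S.φ_ψ 0 hu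
      rw [← e, S.φ_ψ 0 hv] at this
      linarith
    · have := S.expand0 (S.ψ_mem 0 hv) (S.ψ_mem 0 hu) e
      rw [S.φ_ψ 0 hv, S.φ_ψ 0 hu] at this
      linarith
  refine ⟨h1, ?_⟩
  have := S.expand0 (S.ψ_mem 0 hu) (S.ψ_mem 0 hv) h1
  rwa [S.φ_ψ 0 hv, S.φ_ψ 0 hu] at this

lemma zero_mem_I : (0:ℝ) ∈ S.I 0 := ⟨S.ha0.le, S.a1_pos.le⟩

lemma ψ0_zero : S.ψ 0 0 = 0 := by
  have := S.ψ_φ 0 S.zero_mem_I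
  rwa [S.hA4_fix] at this

lemma ψ0_pos {u : ℝ} (hu : u ∈ Icc (0:ℝ) 1) (h : 0 < u) : 0 < S.ψ 0 u ∧ S.ψ 0 u < u := by
  have := S.ψ0_lt (u := 0) (by simp) hu h
  rw [S.ψ0_zero] at this
  exact ⟨this.1, by linarith [this.2]⟩

lemma ψ0_contr {u v : ℝ} (hu : u ∈ Icc (0:ℝ) 1) (hv : v ∈ Icc (0:ℝ) 1) :
    |S.ψ 0 u - S.ψ 0 v| ≤ |u - v| := by
  rcases lt_trichotomy u v with h | h | h
  · have := S.ψ0_lt hu hv h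
    rw [abs_sub_comm, abs_sub_comm u, abs_of_pos (by linarith), abs_of_pos (by linarith)]
    exact this.2.le
  · simp [h]
  · have := S.ψ0_lt hv hu h
    rw [abs_of_pos (by linarith), abs_of_pos (by linarith)]
    exact this.2.le

lemma iter_mem {u : ℝ} (hu : u ∈ Icc (0:ℝ) 1) (n : ℕ) : (S.ψ 0)^[n] u ∈ Icc (0:ℝ) 1 := by
  induction n with
  | zero => simpa using hu
  | succ n ih => rw [Function.iterate_succ_apply']; exact S.ψ_mem01 0 ih

lemma iter_contr {u v : ℝ} (hu : u ∈ Icc (0:ℝ) 1) (hv : v ∈ Icc (0:ℝ) 1) (n : ℕ) :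
    |(S.ψ 0)^[n] u - (S.ψ 0)^[n] v| ≤ |u - v| := by
  induction n with
  | zero => simp
  | succ n ih =>
    rw [Function.iterate_succ_apply', Function.iterate_succ_apply']
    exact (S.ψ0_contr (S.iter_mem hu n) (S.iter_mem hv n)).trans ih

lemma iter_pos {u : ℝ} (hu : u ∈ Icc (0:ℝ) 1) (h : 0 < u) (n : ℕ) : 0 < (S.ψ 0)^[n] u := by
  induction n with
  | zero => simpa using h
  | succ n ih =>
    rw [Function.iterate_succ_apply']
    exact (S.ψ0_pos (S.iter_mem hu n) ih).1

noncomputable def δ : ℝ := S.a 1 - S.ψ 0 (S.a 1)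

lemma a1_mem : S.a 1 ∈ Icc (0:ℝ) 1 := ⟨S.a1_pos.le, (S.ha_lt 1).le⟩

lemma δ_pos : 0 < S.δ := by
  have := (S.ψ0_pos S.a1_mem S.a1_pos).2
  unfold δ; linarith

lemma δ_le {y : ℝ} (hy : y ∈ Icc (S.a 1) 1) : S.δ ≤ y - S.ψ 0 y := by
  rcases hy.1.eq_or_lt with h | h
  · rw [← h]; exact le_rfl
  · have := (S.ψ0_lt S.a1_mem ⟨S.a1_pos.le.trans hy.1, hy.2⟩ h).2
    unfold δ; linarith

/-- the convexity (chord) estimate for iterates of the zero inverse branch -/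
lemma chord {y z : ℝ} (hy : y ∈ Icc (S.a 1) 1) (hz : z ∈ Icc (S.a 1) 1) (h : y < z) (i : ℕ) :
    (S.ψ 0)^[i] y < (S.ψ 0)^[i] z ∧
    (S.ψ 0)^[i] z - (S.ψ 0)^[i] y ≤
      (z - y) / S.δ * ((S.ψ 0)^[i] y - (S.ψ 0)^[i+1] y) := by
  have hd := S.δ_pos
  have hy' : y ∈ Icc (0:ℝ) 1 := ⟨S.a1_pos.le.trans hy.1, hy.2⟩
  have hz' : z ∈ Icc (0:ℝ) 1 := ⟨S.a1_pos.le.trans hz.1, hz.2⟩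
  have hy0 : 0 < y := S.a1_pos.trans_le hy.1
  induction i with
  | zero =>
    refine ⟨by simpa using h, ?_⟩
    have h1 := S.δ_le hy
    simp only [Function.iterate_zero, id, zero_add, Function.iterate_one]
    rw [div_mul_eq_mul_div, le_div_iff₀ hd]
    exact mul_le_mul_of_nonneg_left h1 (by linarith)
  | succ i ih =>
    obtain ⟨ih1, ih2⟩ := ih
    simp only [Function.iterate_succ_apply'] at ih2 ⊢
    set p := (S.ψ 0)^[i] y with hp
    set q := (S.ψ 0)^[i] z with hq
    have hpm : p ∈ Icc (0:ℝ) 1 := S.iter_mem hy' i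
    have hqm : q ∈ Icc (0:ℝ) 1 := S.iter_mem hz' i
    have hp0 : 0 < p := S.iter_pos hy' hy0 i
    have hp1 := S.ψ0_pos hpm hp0
    have hp2 := S.ψ0_pos (S.ψ_mem01 0 hpm) hp1.1
    have hpq := S.ψ0_lt hpm hqm ih1
    refine ⟨hpq.1, ?_⟩
    have hs := S.hA4_conv.slope_mono_adjacent (S.ψ_mem 0 (S.ψ_mem01 0 hpm)) (S.ψ_mem 0 hqm)
      hp2.2 hpq.1
    rw [S.φ_ψ 0 hpm, S.φ_ψ 0 hqm, S.φ_ψ 0 (S.ψ_mem01 0 hpm),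
      div_le_div_iff₀ (by linarith) (by linarith [hpq.1])] at hs
    have h3 : (p - S.ψ 0 p) * (S.ψ 0 q - S.ψ 0 p) ≤
        (p - S.ψ 0 p) * ((z - y) / S.δ * (S.ψ 0 p - S.ψ 0 (S.ψ 0 p))) := by
      refine hs.trans ?_
      calc _ ≤ ((z - y) / S.δ * (p - S.ψ 0 p)) * (S.ψ 0 p - S.ψ 0 (S.ψ 0 p)) :=
            mul_le_mul_of_nonneg_right ih2 (by linarith)
        _ = _ := by ring
    exact le_of_mul_le_mul_left h3 (by linarith)

lemma sum_bound_aux {y z : ℝ} (hy : y ∈ Icc (S.a 1) 1) (hz : z ∈ Icc (S.a 1) 1) (h : y < z)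
    (k : ℕ) :
    ∑ i ∈ Finset.range k, |(S.ψ 0)^[i] y - (S.ψ 0)^[i] z| ≤ |y - z| / S.δ := by
  have hd := S.δ_pos
  have hy' : y ∈ Icc (0:ℝ) 1 := ⟨S.a1_pos.le.trans hy.1, hy.2⟩
  calc _ ≤ ∑ i ∈ Finset.range k, (z - y) / S.δ * ((S.ψ 0)^[i] y - (S.ψ 0)^[i+1] y) := by
        apply Finset.sum_le_sum
        intro i _
        obtain ⟨h1, h2⟩ := S.chord hy hz h i
        rw [abs_sub_comm, abs_of_pos (by linarith)]
        exact h2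
    _ = (z - y) / S.δ * (y - (S.ψ 0)^[k] y) := by
        rw [← Finset.mul_sum, Finset.sum_range_sub']
        simp
    _ ≤ (z - y) / S.δ * 1 := by
        have := (S.iter_mem hy' k).1
        have h2 : 0 ≤ (z - y) / S.δ := div_nonneg (by linarith) hd.le
        exact mul_le_mul_of_nonneg_left (by linarith [hy.2]) h2
    _ = _ := by rw [abs_sub_comm, abs_of_pos (by linarith), mul_one]

lemma sum_bound {y z : ℝ} (hy : y ∈ Icc (S.a 1) 1) (hz : z ∈ Icc (S.a 1) 1) (k : ℕ) :
    ∑ i ∈ Finset.range k, |(S.ψ 0)^[i] y - (S.ψ 0)^[i] z| ≤ |y - z| / S.δ := by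
  rcases lt_trichotomy y z with h | h | h
  · exact S.sum_bound_aux hy hz h k
  · simp [h]
  · have := S.sum_bound_aux hz hy h k
    rw [abs_sub_comm z] at this
    refine le_trans (le_of_eq ?_) this
    exact Finset.sum_congr rfl fun i _ => abs_sub_comm _ _

lemma L_pos (j : ℕ) {g : ℝ → ℝ} (hg : ∀ y ∈ Icc (0:ℝ) 1, 0 < g y) :
    ∀ y ∈ Icc (0:ℝ) 1, 0 < S.L j g y := fun _ hy =>
  div_pos (hg _ (S.ψ_mem01 j hy)) (abs_pos.2 (S.φd_ne j (S.ψ_mem j hy)))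

lemma L_iter_pos {g : ℝ → ℝ} (hg : ∀ y ∈ Icc (0:ℝ) 1, 0 < g y) (n : ℕ) :
    ∀ y ∈ Icc (0:ℝ) 1, 0 < (S.L 0)^[n] g y := by
  induction n with
  | zero => simpa using hg
  | succ n ih => rw [Function.iterate_succ_apply']; exact S.L_pos 0 ih

lemma L_le (j : ℕ) {g : ℝ → ℝ} (hg : ∀ y ∈ Icc (0:ℝ) 1, 0 < g y) {y z e : ℝ}
    (hy : y ∈ Icc (0:ℝ) 1) (hz : z ∈ Icc (0:ℝ) 1)
    (hle : g (S.ψ j y) ≤ Real.exp e * g (S.ψ j z)) :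
    S.L j g y ≤ Real.exp (e + S.K * |y - z|) * S.L j g z := by
  have hd := S.log_dist j (S.ψ_mem j hz) (S.ψ_mem j hy)
  rw [S.φ_ψ j hy, S.φ_ψ j hz, abs_sub_comm z] at hd
  have h1 : 0 < |S.φd j (S.ψ j y)| := abs_pos.2 (S.φd_ne j (S.ψ_mem j hy))
  have h2 : 0 < |S.φd j (S.ψ j z)| := abs_pos.2 (S.φd_ne j (S.ψ_mem j hz))
  have h3 : |S.φd j (S.ψ j z)| ≤ Real.exp (S.K * |y - z|) * |S.φd j (S.ψ j y)| := by
    rw [← Real.exp_log h1, ← Real.exp_log h2, ← Real.exp_add, Real.exp_le_exp, Real.log_abs,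
      Real.log_abs]
    linarith [(abs_le.1 hd).2]
  unfold L
  have hgz := hg _ (S.ψ_mem01 j hz)
  rw [div_le_iff₀ h1, Real.exp_add]
  calc _ ≤ _ := hle
    _ = (Real.exp e * (g (S.ψ j z) / |S.φd j (S.ψ j z)|)) * |S.φd j (S.ψ j z)| := by
        field_simp
    _ ≤ (Real.exp e * (g (S.ψ j z) / |S.φd j (S.ψ j z)|)) *
        (Real.exp (S.K * |y - z|) * |S.φd j (S.ψ j y)|) :=
        mul_le_mul_of_nonneg_left h3 (by positivity)
    _ = _ := by ring

lemma L_iter_le {c : ℝ} {h : ℝ → ℝ} (hh : LL c h) (k : ℕ) : ∀ u ∈ Icc (0:ℝ) 1,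
    ∀ v ∈ Icc (0:ℝ) 1, (S.L 0)^[k] h u ≤
      Real.exp (c * |(S.ψ 0)^[k] u - (S.ψ 0)^[k] v| +
        S.K * ∑ i ∈ Finset.range k, |(S.ψ 0)^[i] u - (S.ψ 0)^[i] v|) * (S.L 0)^[k] h v := by
  induction k with
  | zero => intro u hu v hv; simpa using hh.2 u hu v hv
  | succ k ih =>
    intro u hu v hv
    have := S.L_le 0 (S.L_iter_pos hh.1 k) hu hv
      (ih _ (S.ψ_mem01 0 hu) _ (S.ψ_mem01 0 hv))
    rw [Function.iterate_succ_apply']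
    rw [Finset.sum_range_succ']
    simp only [Function.iterate_succ_apply] at this ⊢
    convert this using 3
    simp only [Function.iterate_zero, id]
    ring

lemma LL_branch {c : ℝ} (hc : 0 ≤ c) {h : ℝ → ℝ} (hh : LL c h) (k j : ℕ) (hj : 1 ≤ j) :
    LL ((c + S.K / S.δ) / S.Λ + S.K) (S.L j ((S.L 0)^[k] h)) := by
  refine ⟨S.L_pos j (S.L_iter_pos hh.1 k), fun y hy z hz => ?_⟩
  have h1 := S.L_le j (S.L_iter_pos hh.1 k) hy hz
    (S.L_iter_le hh k _ (S.ψ_mem01 j hy) _ (S.ψ_mem01 j hz))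
  refine h1.trans ?_
  refine mul_le_mul_of_nonneg_right (Real.exp_le_exp.2 ?_)
    (S.L_pos j (S.L_iter_pos hh.1 k) z hz).le
  have hΛ := S.hΛ
  have hd := S.δ_pos
  have hK := S.hK
  have e1 := S.expand j hj (S.ψ_mem j hy) (S.ψ_mem j hz)
  rw [S.φ_ψ j hy, S.φ_ψ j hz] at e1
  have e2 : |S.ψ j y - S.ψ j z| ≤ |y - z| / S.Λ := by
    rw [le_div_iff₀ (by linarith)]; linarith
  have e3 := S.iter_contr (S.ψ_mem01 j hy) (S.ψ_mem01 j hz) k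
  have e4 := S.sum_bound (S.I_sub' j hj (S.ψ_mem j hy)) (S.I_sub' j hj (S.ψ_mem j hz)) k
  calc _ ≤ c * (|y - z| / S.Λ) + S.K * ((|y - z| / S.Λ) / S.δ) + S.K * |y - z| := by
        gcongr
        · exact e3.trans e2
        · refine e4.trans ?_
          gcongr
    _ = _ := by
        have : S.Λ ≠ 0 := by linarith
        field_simp

/-! ### integrals -/

lemma lint_branch (j : ℕ) {s : Set ℝ} (hs : MeasurableSet s) (hsI : s ⊆ S.I j) (g : ℝ → ℝ) :
    ∫⁻ x in s, ENNReal.ofReal (g x) = ∫⁻ y in S.φ j '' s, ENNReal.ofReal (S.L j g y) := by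
  rw [lintegral_image_eq_lintegral_abs_deriv_mul hs
    (fun x hx => (S.hφ_d j x (hsI hx)).mono hsI) ((S.hφ_bij j).injOn.mono hsI)]
  refine setLIntegral_congr_fun hs fun x hx => ?_
  have h1 := abs_pos.2 (S.φd_ne j (hsI hx))
  simp only [L]
  rw [S.ψ_φ j (hsI hx), ← ENNReal.ofReal_mul h1.le, mul_div_cancel₀ _ h1.ne']

lemma Inv_one : S.Inv (Icc 0 1) := by
  refine ⟨subset_rfl, measurableSet_Icc, ?_⟩
  have : Icc (0:ℝ) 1 ∩ S.T ⁻¹' Icc 0 1 = Icc 0 1 := inter_eq_left.2 S.hT_maps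
  rw [this]; simp

lemma lint_inv {B : Set ℝ} (hB : S.Inv B) (j : ℕ) (g : ℝ → ℝ) :
    ∫⁻ x in B ∩ S.I j, ENNReal.ofReal (g x) = ∫⁻ y in B, ENNReal.ofReal (S.L j g y) := by
  obtain ⟨hB1, hB2, hB3⟩ := hB
  have hc : ContinuousOn (S.φ j) (S.I j) := fun x hx => (S.hφ_d j x hx).continuousWithinAt
  have hm : MeasurableSet (S.I j ∩ S.φ j ⁻¹' B) := by
    have h1 : Measurable ((S.I j).domRestrict (S.φ j)) :=
      (continuousOn_iff_continuous_domRestrict.1 hc).measurable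
    have h2 := (measurableSet_Icc (a := S.a j) (b := S.a (j+1))).subtype_image (h1 hB2)
    convert h2 using 1
    ext x; simp [I]
    tauto
  have him : S.φ j '' (S.I j ∩ S.φ j ⁻¹' B) = B := by
    rw [image_inter_preimage]
    have : S.φ j '' S.I j = Icc 0 1 := (S.hφ_bij j).image_eq
    rw [this, inter_eq_right]; exact hB1
  have hae : (B ∩ S.I j : Set ℝ) =ᵐ[volume] (S.I j ∩ S.φ j ⁻¹' B : Set ℝ) := by
    have n1 : ∀ᵐ x : ℝ, x ≠ S.a j := Measure.ae_ne _ _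
    have n2 : ∀ᵐ x : ℝ, x ≠ S.a (j+1) := Measure.ae_ne _ _
    have n3 : ∀ᵐ x : ℝ, x ∉ symmDiff (Set.Icc 0 1 ∩ S.T ⁻¹' B) B := measure_eq_zero_iff_ae_notMem.1 hB3
    filter_upwards [n1, n2, n3] with x h1 h2 h3
    apply propext
    change (x ∈ B ∩ S.I j) ↔ (x ∈ S.I j ∩ S.φ j ⁻¹' B)
    rw [inter_comm, mem_inter_iff, mem_inter_iff]
    refine and_congr_right fun hx => ?_
    have hT := S.hT_eq j x ⟨lt_of_le_of_ne hx.1 (Ne.symm h1), lt_of_le_of_ne hx.2 h2⟩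
    have hx1 := S.I_sub j hx
    rw [mem_symmDiff, mem_inter_iff, mem_preimage, hT] at h3
    rw [mem_preimage]
    tauto
  rw [setLIntegral_congr hae, S.lint_branch j hm inter_subset_left, him]

lemma iUnion_Ico : ⋃ j, Ico (S.a j) (S.a (j+1)) = Ico 0 1 := by
  ext x
  simp only [mem_iUnion]
  constructor
  · rintro ⟨j, hj⟩
    exact ⟨(S.a_nonneg j).trans hj.1, hj.2.trans (S.ha_lt _)⟩
  · intro hx
    have hex : ∃ n, x < S.a n := (S.ha_lim.eventually (lt_mem_nhds hx.2)).exists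
    classical
    have h1 := Nat.find_spec hex
    have h0 : Nat.find hex ≠ 0 := by
      intro h
      rw [h, S.ha0] at h1
      exact absurd hx.1 (not_le.2 h1)
    obtain ⟨m, hm⟩ := Nat.exists_eq_succ_of_ne_zero h0
    refine ⟨m, not_lt.1 (Nat.find_min hex (by omega)), ?_⟩
    rw [hm] at h1; exact h1

lemma lint_decomp {B : Set ℝ} (hB : S.Inv B) (g : ℝ → ℝ) :
    ∫⁻ x in B, ENNReal.ofReal (g x) = (∫⁻ y in B, ENNReal.ofReal (S.L 0 g y)) +
      ∑' j, ∫⁻ y in B, ENNReal.ofReal (S.L (j+1) g y) := by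
  have hB' := hB
  obtain ⟨hB1, hB2, hB3⟩ := hB
  have h1 : B =ᵐ[volume] (⋃ j, B ∩ Ico (S.a j) (S.a (j+1)) : Set ℝ) := by
    rw [← inter_iUnion, S.iUnion_Ico]
    have n2 : ∀ᵐ x : ℝ, x ≠ 1 := Measure.ae_ne _ _
    filter_upwards [n2] with x hx
    apply propext
    change x ∈ B ↔ x ∈ B ∩ Ico 0 1
    constructor
    · intro h
      exact ⟨h, (hB1 h).1, lt_of_le_of_ne (hB1 h).2 hx⟩
    · exact fun h => h.1
  rw [setLIntegral_congr h1, lintegral_iUnion (fun j => hB2.inter measurableSet_Ico)]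
  · have : ∀ j, ∫⁻ x in B ∩ Ico (S.a j) (S.a (j+1)), ENNReal.ofReal (g x) =
        ∫⁻ y in B, ENNReal.ofReal (S.L j g y) := by
      intro j
      rw [← S.lint_inv hB' j g]
      exact setLIntegral_congr ((ae_eq_refl B).inter Ico_ae_eq_Icc)
    simp only [this]
    rw [tsum_eq_zero_add' ENNReal.summable]
  · intro i j hij
    have := S.ha_mono.monotone.pairwise_disjoint_on_Ico_succ hij
    exact this.mono inter_subset_right inter_subset_right

lemma lint_decomp_iter {B : Set ℝ} (hB : S.Inv B) (g : ℝ → ℝ) (n : ℕ) :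
    ∫⁻ x in B, ENNReal.ofReal (g x) = (∫⁻ y in B, ENNReal.ofReal ((S.L 0)^[n] g y)) +
      ∑ k ∈ Finset.range n, ∑' j, ∫⁻ y in B, ENNReal.ofReal (S.L (j+1) ((S.L 0)^[k] g) y) := by
  induction n with
  | zero => simp
  | succ n ih =>
    rw [ih, Finset.sum_range_succ, S.lint_decomp hB ((S.L 0)^[n] g), Function.iterate_succ_apply']
    ring

lemma lint_L0 {c : ℝ} (hc : c ∈ Icc (0:ℝ) 1) (g : ℝ → ℝ) :
    ∫⁻ y in Icc 0 c, ENNReal.ofReal (S.L 0 g y) =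
      ∫⁻ x in Icc 0 (S.ψ 0 c), ENNReal.ofReal (g x) := by
  have hm := S.ψ_mem 0 hc
  have hsub : Icc 0 (S.ψ 0 c) ⊆ S.I 0 := fun x hx => ⟨S.ha0.le.trans hx.1, hx.2.trans hm.2⟩
  rw [S.lint_branch 0 measurableSet_Icc hsub]
  congr 2
  ext y
  constructor
  · intro hy
    have hy1 : y ∈ Icc (0:ℝ) 1 := ⟨hy.1, hy.2.trans hc.2⟩
    refine ⟨S.ψ 0 y, ⟨(S.ψ_mem01 0 hy1).1, ?_⟩, S.φ_ψ 0 hy1⟩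
    rcases hy.2.eq_or_lt with h | h
    · rw [h]
    · exact (S.ψ0_lt hy1 hc h).1.le
  · rintro ⟨x, hx, rfl⟩
    have h01 := (S.hφ_bij 0).mapsTo (hsub hx)
    refine ⟨h01.1, ?_⟩
    by_contra! hlt
    have := (S.ψ0_lt hc h01 hlt).1
    rw [S.ψ_φ 0 (hsub hx)] at this
    exact absurd hx.2 (not_le.2 this)

lemma lint_L0_iter (g : ℝ → ℝ) (n : ℕ) : ∀ c ∈ Icc (0:ℝ) 1,
    ∫⁻ y in Icc 0 c, ENNReal.ofReal ((S.L 0)^[n] g y) =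
      ∫⁻ x in Icc 0 ((S.ψ 0)^[n] c), ENNReal.ofReal (g x) := by
  induction n with
  | zero => simp
  | succ n ih =>
    intro c hc
    rw [Function.iterate_succ_apply', S.lint_L0 hc, ih _ (S.ψ_mem01 0 hc),
      Function.iterate_succ_apply]

lemma iter_tendsto : Tendsto (fun n => (S.ψ 0)^[n] 1) atTop (nhds 0) := by
  have h1 : (1:ℝ) ∈ Icc (0:ℝ) 1 := by simp
  have hanti : Antitone (fun n => (S.ψ 0)^[n] 1) := by
    apply antitone_nat_of_succ_le
    intro n
    rw [Function.iterate_succ_apply']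
    exact (S.ψ0_pos (S.iter_mem h1 n) (S.iter_pos h1 one_pos n)).2.le
  have hbdd : BddBelow (range fun n => (S.ψ 0)^[n] (1:ℝ)) :=
    ⟨0, by rintro _ ⟨n, rfl⟩; exact (S.iter_mem h1 n).1⟩
  have ht := tendsto_atTop_ciInf hanti hbdd
  set p := ⨅ n, (S.ψ 0)^[n] (1:ℝ) with hp
  have hpm : p ∈ Icc (0:ℝ) 1 :=
    isClosed_Icc.mem_of_tendsto ht (Eventually.of_forall fun n => S.iter_mem h1 n)
  have hfix : S.ψ 0 p = p := by
    have t1 : Tendsto (fun n => (S.ψ 0)^[n+1] (1:ℝ)) atTop (nhds p) :=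
      (tendsto_add_atTop_iff_nat 1).2 ht
    have t2 : Tendsto (fun n => (S.ψ 0)^[n+1] (1:ℝ)) atTop (nhds (S.ψ 0 p)) := by
      rw [tendsto_iff_dist_tendsto_zero] at ht ⊢
      refine squeeze_zero (fun _ => dist_nonneg) (fun n => ?_) ht
      rw [Function.iterate_succ_apply', Real.dist_eq, Real.dist_eq]
      exact S.ψ0_contr (S.iter_mem h1 n) hpm
    exact tendsto_nhds_unique t2 t1
  have : p = 0 := by
    rcases hpm.1.eq_or_lt with h | h
    · exact h.symm
    · have := (S.ψ0_pos hpm h).2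
      linarith
  rwa [this] at ht

lemma LL_bound {c : ℝ} (hc : 0 ≤ c) {h : ℝ → ℝ} (hh : LL c h) :
    ∀ y ∈ Icc (0:ℝ) 1, h y ≤ Real.exp c * h 0 ∧ Real.exp (-c) * h 0 ≤ h y := by
  intro y hy
  have h0 : (0:ℝ) ∈ Icc (0:ℝ) 1 := by simp
  have hy1 : c * y ≤ c := by nlinarith [hy.1, hy.2]
  constructor
  · refine (hh.2 y hy 0 h0).trans ?_
    gcongr
    · exact (hh.1 0 h0).le
    · rw [sub_zero, abs_of_nonneg hy.1]; exact hy1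
  · have h1 : h 0 ≤ Real.exp c * h y := by
      refine (hh.2 0 h0 y hy).trans ?_
      gcongr
      · exact (hh.1 y hy).le
      · rw [zero_sub, abs_neg, abs_of_nonneg hy.1]; exact hy1
    calc _ ≤ Real.exp (-c) * (Real.exp c * h y) := by gcongr
      _ = h y := by rw [← mul_assoc, ← Real.exp_add]; simp

lemma rem_tendsto {c : ℝ} (hc : 0 ≤ c) {h : ℝ → ℝ} (hh : LL c h) :
    Tendsto (fun n => ∫⁻ y in Icc 0 1, ENNReal.ofReal ((S.L 0)^[n] h y)) atTop (nhds 0) := by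
  have h1 : (1:ℝ) ∈ Icc (0:ℝ) 1 := by simp
  have ht : Tendsto (fun n => ENNReal.ofReal (Real.exp c * h 0) * ENNReal.ofReal ((S.ψ 0)^[n] 1))
      atTop (nhds 0) := by
    have := ENNReal.Tendsto.const_mul (a := ENNReal.ofReal (Real.exp c * h 0))
      (ENNReal.tendsto_ofReal S.iter_tendsto) (Or.inr ENNReal.ofReal_ne_top)
    simpa using this
  refine tendsto_of_tendsto_of_tendsto_of_le_of_le tendsto_const_nhds ht (fun _ => zero_le) ?_
  intro n
  simp only
  rw [S.lint_L0_iter h n 1 h1]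
  calc _ ≤ ∫⁻ x in Icc 0 ((S.ψ 0)^[n] 1), ENNReal.ofReal (Real.exp c * h 0) := by
        refine setLIntegral_mono' measurableSet_Icc fun x hx => ?_
        exact ENNReal.ofReal_le_ofReal
          (LL_bound hc hh x ⟨hx.1, hx.2.trans (S.iter_mem h1 n).2⟩).1
    _ = _ := by rw [setLIntegral_const, Real.volume_Icc, sub_zero]

/-- the lower bound property -/
def P (A : Set ℝ) (θ : ENNReal) (c : ℝ) : Prop := ∀ h, LL c h →
  θ * ∫⁻ y in Icc 0 1, ENNReal.ofReal (h y) ≤ ∫⁻ y in A, ENNReal.ofReal (h y)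

lemma P_step {A : Set ℝ} (hA : S.Inv A) {θ : ENNReal} (hθ : θ ≠ ⊤) {c : ℝ} (hc : 0 ≤ c)
    (hP : P A θ ((c + S.K / S.δ) / S.Λ + S.K)) : P A θ c := by
  intro h hh
  have key : ∀ n, θ * ∫⁻ y in Icc 0 1, ENNReal.ofReal (h y) ≤
      θ * (∫⁻ y in Icc 0 1, ENNReal.ofReal ((S.L 0)^[n] h y)) +
        ∫⁻ y in A, ENNReal.ofReal (h y) := by
    intro n
    rw [S.lint_decomp_iter S.Inv_one h n, S.lint_decomp_iter hA h n, mul_add]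
    refine add_le_add le_rfl ?_
    refine le_trans ?_ le_add_self
    rw [Finset.mul_sum]
    refine Finset.sum_le_sum fun k _ => ?_
    rw [← ENNReal.tsum_mul_left]
    exact ENNReal.tsum_le_tsum fun j => hP _ (S.LL_branch hc hh k (j+1) (by omega))
  have ht : Tendsto (fun n => θ * (∫⁻ y in Icc 0 1, ENNReal.ofReal ((S.L 0)^[n] h y)) +
        ∫⁻ y in A, ENNReal.ofReal (h y)) atTop (nhds (θ * 0 + ∫⁻ y in A, ENNReal.ofReal (h y))) :=
    (ENNReal.Tendsto.const_mul (S.rem_tendsto hc hh) (Or.inr hθ)).add tendsto_const_nhds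
  rw [mul_zero, zero_add] at ht
  exact ge_of_tendsto' ht key

lemma LL_mono {c c' : ℝ} (hcc : c ≤ c') {h : ℝ → ℝ} (hh : LL c h) : LL c' h := by
  refine ⟨hh.1, fun y hy z hz => (hh.2 y hy z hz).trans ?_⟩
  have := (hh.1 z hz).le
  gcongr

lemma P_base {A : Set ℝ} (hA : S.Inv A) {c : ℝ} (hc : 0 ≤ c) :
    P A (ENNReal.ofReal (Real.exp (-(2*c))) * volume A) c := by
  intro h hh
  calc _ ≤ ENNReal.ofReal (Real.exp (-(2*c))) * volume A *
        ∫⁻ y in Icc (0:ℝ) 1, ENNReal.ofReal (Real.exp c * h 0) := by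
        refine mul_le_mul' le_rfl ?_
        refine setLIntegral_mono' measurableSet_Icc fun x hx => ?_
        exact ENNReal.ofReal_le_ofReal (LL_bound hc hh x hx).1
    _ = ENNReal.ofReal (Real.exp (-c) * h 0) * volume A := by
        rw [setLIntegral_const, Real.volume_Icc, sub_zero, ENNReal.ofReal_one, mul_one,
          mul_right_comm, ← ENNReal.ofReal_mul (Real.exp_pos _).le, ← mul_assoc, ← Real.exp_add]
        congr 4
        ring
    _ = ∫⁻ y in A, ENNReal.ofReal (Real.exp (-c) * h 0) := by rw [setLIntegral_const]
    _ ≤ _ := by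
        refine setLIntegral_mono' hA.2.1 fun x hx => ?_
        exact ENNReal.ofReal_le_ofReal (LL_bound hc hh x (hA.1 hx)).2

lemma vol_ne_top {A : Set ℝ} (hA : S.Inv A) : volume A ≠ ⊤ :=
  ((measure_mono hA.1).trans_lt (by simp)).ne

/-- a uniform lower bound for all log-Lipschitz functions -/
lemma P_all {A : Set ℝ} (hA : S.Inv A) (h0 : volume A ≠ 0) :
    ∃ θ : ENNReal, θ ≠ 0 ∧ θ ≠ ⊤ ∧ ∀ c, 0 ≤ c → P A θ c := by
  have hΛ := S.hΛ
  have hd := S.δ_pos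
  have hK := S.hK
  set M := S.K / S.δ / S.Λ + S.K with hM
  have hMpos : 0 < M := by positivity
  set C := M / (1 - S.Λ⁻¹) + 1 with hC
  have hi : 0 < 1 - S.Λ⁻¹ := by
    have := inv_lt_one_of_one_lt₀ hΛ; linarith
  have hi0 : 0 < S.Λ⁻¹ := by positivity
  have hC0 : 0 < C := by positivity
  refine ⟨ENNReal.ofReal (Real.exp (-(2*C))) * volume A, ?_, ?_, ?_⟩
  · refine mul_ne_zero ?_ h0
    simpa using Real.exp_pos _
  · exact ENNReal.mul_ne_top ENNReal.ofReal_ne_top (S.vol_ne_top hA)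
  · have hθ : ENNReal.ofReal (Real.exp (-(2*C))) * volume A ≠ ⊤ :=
      ENNReal.mul_ne_top ENNReal.ofReal_ne_top (S.vol_ne_top hA)
    have hfix : M + (1 - S.Λ⁻¹) ≤ C * (1 - S.Λ⁻¹) := by
      rw [hC, add_mul, div_mul_cancel₀ _ hi.ne']; linarith
    have hn : ∀ n : ℕ, ∀ c, 0 ≤ c → c ≤ C + n * (1 - S.Λ⁻¹) →
        P A (ENNReal.ofReal (Real.exp (-(2*C))) * volume A) c := by
      intro n
      induction n with
      | zero =>
        intro c _ hc h hh
        exact S.P_base hA hC0.le h (LL_mono (by simpa using hc) hh)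
      | succ n ih =>
        intro c hc hcn
        by_cases hcC : c ≤ C
        · intro h hh
          exact S.P_base hA hC0.le h (LL_mono hcC hh)
        · refine S.P_step hA hθ hc (ih _ (by positivity) ?_)
          have e : (c + S.K / S.δ) / S.Λ + S.K = c * S.Λ⁻¹ + M := by
            rw [hM]; ring
          rw [e]
          push_cast at hcn
          nlinarith
    intro c hc
    obtain ⟨n, hn'⟩ := exists_nat_gt ((c - C) / (1 - S.Λ⁻¹))
    rw [div_lt_iff₀ hi] at hn'
    exact hn n c hc (by linarith)

end IntervalMapSetup

/-- a Markov interval map satisfying (A1)–(A4) is ergodic w.r.t. Lebesgue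
measure: every Borel `A ⊆ [0,1]` with `T⁻¹A = A` mod null sets is trivial. -/
theorem ergodic_of_intervalMapSetup (S : IntervalMapSetup) :
    ∀ A : Set ℝ, A ⊆ Set.Icc 0 1 → MeasurableSet A →
      volume (symmDiff (Set.Icc 0 1 ∩ S.T ⁻¹' A) A) = 0 →
      volume A = 0 ∨ volume (Set.Icc 0 1 \ A) = 0 := by
  intro A hA1 hA2 hA3
  by_cases h0 : volume A = 0
  · exact Or.inl h0
  right
  have hA : S.Inv A := ⟨hA1, hA2, hA3⟩
  obtain ⟨θ, hθ0, hθt, hP⟩ := S.P_all hA h0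
  by_contra hN
  obtain ⟨F, hFN, hFc, hF0⟩ := (measurableSet_Icc.diff hA2).exists_lt_isCompact
    (pos_iff_ne_zero.2 hN)
  have hFne : F.Nonempty := nonempty_of_measure_ne_zero hF0.ne'
  have hLL : ∀ n : ℕ, IntervalMapSetup.LL n (fun x => Real.exp (-(n * Metric.infDist x F))) := by
    intro n
    refine ⟨fun _ _ => Real.exp_pos _, fun y _ z _ => ?_⟩
    rw [← Real.exp_add, Real.exp_le_exp]
    have := Metric.infDist_le_infDist_add_dist (s := F) (x := z) (y := y)
    rw [dist_comm, Real.dist_eq] at this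
    have h2 := mul_le_mul_of_nonneg_left this (Nat.cast_nonneg (α := ℝ) n)
    linarith
  have hlow : ∀ n : ℕ, θ * volume F ≤
      ∫⁻ x in A, ENNReal.ofReal (Real.exp (-(n * Metric.infDist x F))) := by
    intro n
    refine le_trans ?_ (hP n (Nat.cast_nonneg n) _ (hLL n))
    gcongr
    calc volume F = ∫⁻ x in F, 1 := by simp
      _ ≤ ∫⁻ x in F, ENNReal.ofReal (Real.exp (-(n * Metric.infDist x F))) := by
          refine setLIntegral_mono' hFc.measurableSet fun x hx => ?_
          simp [Metric.infDist_zero_of_mem hx]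
      _ ≤ _ := lintegral_mono_set fun x hx => (hFN hx).1
  have hlim : Tendsto (fun n : ℕ =>
      ∫⁻ x in A, ENNReal.ofReal (Real.exp (-(n * Metric.infDist x F)))) atTop
      (nhds (∫⁻ x in A, 0)) := by
    refine tendsto_lintegral_of_dominated_convergence (fun _ => 1) ?_ ?_ ?_ ?_
    · intro n
      fun_prop
    · intro n
      refine Eventually.of_forall fun x => ?_
      have : 0 ≤ n * Metric.infDist x F := mul_nonneg (Nat.cast_nonneg n) Metric.infDist_nonneg
      rw [ENNReal.ofReal_le_one, Real.exp_le_one_iff]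
      linarith
    · simpa using S.vol_ne_top hA
    · refine (ae_restrict_iff' hA2).2 (Eventually.of_forall fun x hx => ?_)
      have hxF : x ∉ F := fun h => (hFN h).2 hx
      have hpos := (hFc.isClosed.notMem_iff_infDist_pos hFne).1 hxF
      rw [← ENNReal.ofReal_zero]
      refine ENNReal.tendsto_ofReal (Real.tendsto_exp_neg_atTop_nhds_zero.comp ?_)
      exact tendsto_natCast_atTop_atTop.atTop_mul_const hpos
  rw [lintegral_zero] at hlim
  have := ge_of_tendsto' hlim hlow
  exact mul_ne_zero hθ0 hF0.ne' (le_antisymm this zero_le)
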